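/- Let n ≥ 3, q > 2/(n-2), s ∈ [0,1), q + s < n/(n-2). Suppose u, v : ℝⁿ → (0,∞) are continuous, ℓ_u := lim_{|x|→∞} |x|^{n-2} u(x) and ℓ_v := lim_{|x|→∞} |x|^{((n-2)q-2)/(1-s)} v(x) exist in (0,∞), and v(x) = ∫ Γ(x-y) u(y)^q v(y)^s dy for all x. Then ℓ_u^q ℓ_v^{s-1} = ((n-2)q - 2)(n - (n-2)(q+s)) / (1-s)². -/

import Mathlib

open MeasureTheory Filter

/-!
Write `d` for the dimension. Let `f = u ^ q * v ^ s`, `a = ((d - 2) * q - 2) / (1 - s)` and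
`β = a + 2`. Since `(d - 2) * q + a * s = β`, the decay of `u` and `v` says that
`f y = L * ‖y‖ ^ (-β) + o(‖y‖ ^ (-β))` at infinity, where `L = lu ^ q * lv ^ s`. The kernel `Γ` maps
the model term `L * ‖y‖ ^ (-β)` to an explicit multiple of `‖x‖ ^ (-a)`, by the Riesz composition
formula `∫ ‖x - y‖ ^ (-α) * ‖y‖ ^ (-β) = rieszConst d α β * ‖x‖ ^ (d - α - β)` with `α = d - 2`.
It maps the remainder to `o(‖x‖ ^ (-a))`: outside a large ball the composition formula bounds the
contribution by `ε * ‖x‖ ^ (-a)`, and inside it the contribution is `O(‖x‖ ^ (2 - d))`, where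
`a < d - 2`. Comparing with `v x ∼ lv * ‖x‖ ^ (-a)` gives `lv = L / (a * (d - 2 - a))`.

The composition formula itself follows by writing both powers as Gamma integrals and integrating
the resulting Gaussian in `y` first, by Tonelli's theorem.
-/

section RieszComposition

open Module Set Real

lemma lintegral_ofReal_const_mul {X : Type*} [MeasurableSpace X] {μ : Measure X} {f : X → ℝ}
    {c I : ℝ} (hc : 0 ≤ c) (h : ∫⁻ x, ENNReal.ofReal (f x) ∂μ = ENNReal.ofReal I) :
    ∫⁻ x, ENNReal.ofReal (c * f x) ∂μ = ENNReal.ofReal (c * I) := by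
  simp_rw [ENNReal.ofReal_mul hc]
  rw [lintegral_const_mul' _ _ ENNReal.ofReal_ne_top, h]

lemma lintegral_Ioi_rpow_mul_exp_neg_mul {a r : ℝ} (ha : 0 < a) (hr : 0 < r) :
    ∫⁻ t in Ioi (0 : ℝ), ENNReal.ofReal (t ^ (a - 1) * exp (-(r * t))) =
      ENNReal.ofReal (r ^ (-a) * Gamma a) := by
  have hval : ∫ t in Ioi (0 : ℝ), t ^ (a - 1) * exp (-(r * t)) = r ^ (-a) * Gamma a := by
    rw [integral_rpow_mul_exp_neg_mul_Ioi ha hr, one_div, inv_rpow hr.le, rpow_neg hr.le]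
  have hint : IntegrableOn (fun t : ℝ => t ^ (a - 1) * exp (-(r * t))) (Ioi 0) := by
    simpa using integrableOn_rpow_mul_exp_neg_mul_rpow (s := a - 1) (by linarith) one_pos hr
  rw [← hval, ofReal_integral_eq_lintegral_ofReal hint]
  filter_upwards [ae_restrict_mem measurableSet_Ioi] with t ht
  exact mul_nonneg (rpow_nonneg (le_of_lt ht) _) (exp_pos _).le

lemma lintegral_lintegral_lintegral_reverse {X Y Z : Type*} [MeasurableSpace X]
    [MeasurableSpace Y] [MeasurableSpace Z] {μ : Measure X} {ν : Measure Y} {ρ : Measure Z}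
    [SFinite μ] [SFinite ν] [SFinite ρ] {F : X → Y → Z → ENNReal}
    (hF : Measurable fun x : X × Y × Z => F x.1 x.2.1 x.2.2) :
    ∫⁻ x, ∫⁻ y, ∫⁻ z, F x y z ∂ρ ∂ν ∂μ = ∫⁻ z, ∫⁻ y, ∫⁻ x, F x y z ∂μ ∂ν ∂ρ := by
  have hF' : Measurable fun p : (X × Z) × Y => F p.1.1 p.2 p.1.2 :=
    hF.comp (by fun_prop : Measurable fun p : (X × Z) × Y => (p.1.1, p.2, p.1.2))
  calc ∫⁻ x, ∫⁻ y, ∫⁻ z, F x y z ∂ρ ∂ν ∂μ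
      = ∫⁻ x, ∫⁻ z, ∫⁻ y, F x y z ∂ν ∂ρ ∂μ := lintegral_congr fun x =>
        lintegral_lintegral_swap
          (hF.comp (by fun_prop : Measurable fun p : Y × Z => (x, p))).aemeasurable
    _ = ∫⁻ z, ∫⁻ x, ∫⁻ y, F x y z ∂ν ∂μ ∂ρ :=
        lintegral_lintegral_swap hF'.lintegral_prod_right'.aemeasurable
    _ = ∫⁻ z, ∫⁻ y, ∫⁻ x, F x y z ∂μ ∂ν ∂ρ := lintegral_congr fun z =>
        lintegral_lintegral_swap
          (hF.comp (by fun_prop : Measurable fun p : X × Y => (p.1, p.2, z))).aemeasurable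

lemma nontrivial_of_finrank_lt_add {V : Type*} [AddCommGroup V] [Module ℝ V] {α β : ℝ}
    (hα : α < finrank ℝ V) (hβ : β < finrank ℝ V) (hαβ : finrank ℝ V < α + β) : Nontrivial V :=
  nontrivial_of_finrank_pos (R := ℝ) (by exact_mod_cast (by linarith : (0 : ℝ) < finrank ℝ V))

/-- Schwinger's parametrization of `A ^ (-p) * B ^ (-r)`, with parameters `t` for `A` and `t * l`
for `B`, so that `A` and `B` occur only in an exponential. The factor `t` from the change of
variables `t * l` is included. -/
noncomputable def schwingerDensity (p r A B t l : ℝ) : ℝ :=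
  t ^ (p + r - 1) * l ^ (r - 1) * exp (-(t * (A + l * B)))

lemma lintegral_lintegral_schwingerDensity {p r A B : ℝ} (hp : 0 < p) (hr : 0 < r) (hA : 0 < A)
    (hB : 0 < B) :
    ∫⁻ t in Ioi (0 : ℝ), ∫⁻ l in Ioi (0 : ℝ), ENNReal.ofReal (schwingerDensity p r A B t l) =
      ENNReal.ofReal (Gamma p * Gamma r * (A ^ (-p) * B ^ (-r))) := by
  have inner : ∀ t ∈ Ioi (0 : ℝ),
      ∫⁻ l in Ioi (0 : ℝ), ENNReal.ofReal (schwingerDensity p r A B t l) =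
        ENNReal.ofReal (B ^ (-r) * Gamma r * (t ^ (p - 1) * exp (-(A * t)))) := by
    intro t (ht : 0 < t)
    have hsplit : ∀ l, schwingerDensity p r A B t l =
        t ^ (p + r - 1) * exp (-(A * t)) * (l ^ (r - 1) * exp (-(t * B * l))) := fun l => by
      rw [schwingerDensity, show -(t * (A + l * B)) = -(A * t) + -(t * B * l) by ring, exp_add]
      ring
    simp_rw [hsplit]
    rw [lintegral_ofReal_const_mul (by positivity)
      (lintegral_Ioi_rpow_mul_exp_neg_mul hr (by positivity)), mul_rpow ht.le hB.le,
      show p + r - 1 = p - 1 + r by ring, rpow_add ht, rpow_neg ht.le]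
    congr 1
    field_simp
  rw [setLIntegral_congr_fun measurableSet_Ioi inner, lintegral_ofReal_const_mul
    (by positivity) (lintegral_Ioi_rpow_mul_exp_neg_mul hp hA)]
  congr 1
  ring

lemma measurable_schwingerDensity (p r : ℝ) {X : Type*} [MeasurableSpace X] {A B t l : X → ℝ}
    (hA : Measurable A) (hB : Measurable B) (ht : Measurable t) (hl : Measurable l) :
    Measurable fun x => schwingerDensity p r (A x) (B x) (t x) (l x) := by
  unfold schwingerDensity
  fun_prop

lemma lintegral_Ioi_rpow_mul_one_add_rpow {a b : ℝ} (ha : 0 < a) (hb : 0 < b) :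
    ∫⁻ l in Ioi (0 : ℝ), ENNReal.ofReal (l ^ (a - 1) * (1 + l) ^ (-(a + b))) =
      ENNReal.ofReal (Gamma a * Gamma b / Gamma (a + b)) := by
  have hΓ : 0 < Gamma (a + b) := Gamma_pos_of_pos (by positivity)
  have inner : ∀ l ∈ Ioi (0 : ℝ),
      ∫⁻ t in Ioi (0 : ℝ), ENNReal.ofReal (schwingerDensity b a 1 1 t l) =
        ENNReal.ofReal (Gamma (a + b) * (l ^ (a - 1) * (1 + l) ^ (-(a + b)))) := by
    intro l (hl : 0 < l)
    have hsplit : ∀ t, schwingerDensity b a 1 1 t l =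
        l ^ (a - 1) * (t ^ (a + b - 1) * exp (-((1 + l) * t))) := fun t => by
      rw [schwingerDensity, add_comm b, mul_one, mul_comm t (1 + l)]
      ring
    simp_rw [hsplit]
    rw [lintegral_ofReal_const_mul (by positivity)
      (lintegral_Ioi_rpow_mul_exp_neg_mul (by positivity) (by positivity))]
    congr 1
    ring
  have hmul := lintegral_lintegral_schwingerDensity hb ha one_pos one_pos
  rw [lintegral_lintegral_swap (measurable_schwingerDensity b a measurable_const measurable_const
    measurable_fst measurable_snd).ennreal_ofReal.aemeasurable,
    setLIntegral_congr_fun measurableSet_Ioi inner] at hmul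
  have hdiv := lintegral_ofReal_const_mul (inv_nonneg.2 hΓ.le) hmul
  simpa [inv_mul_cancel_left₀ hΓ.ne', div_eq_inv_mul, mul_comm (Gamma b)] using hdiv

variable {E : Type*} [NormedAddCommGroup E] [InnerProductSpace ℝ E] [FiniteDimensional ℝ E]
  [MeasurableSpace E] [BorelSpace E]

local notation "dim(" V ")" => (finrank ℝ V : ℝ)

lemma lintegral_exp_neg_mul_sq_norm {b : ℝ} (hb : 0 < b) :
    ∫⁻ z : E, ENNReal.ofReal (exp (-b * ‖z‖ ^ 2)) =
      ENNReal.ofReal ((π / b) ^ (dim(E) / 2)) := by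
  have hval := GaussianFourier.integral_rexp_neg_mul_sq_norm (V := E) hb
  have hint : Integrable fun z : E => exp (-b * ‖z‖ ^ 2) := by
    refine Integrable.of_integral_ne_zero ?_
    rw [hval]
    positivity
  rw [← hval, ofReal_integral_eq_lintegral_ofReal hint (ae_of_all _ fun z => (exp_pos _).le)]

lemma mul_sq_norm_sub_add_mul_sq_norm {V : Type*} [NormedAddCommGroup V] [InnerProductSpace ℝ V]
    (w z : V) {l : ℝ} (hl : 0 < 1 + l) :
    ‖w - z‖ ^ 2 + l * ‖z‖ ^ 2 =
      (1 + l) * ‖z - (1 + l)⁻¹ • w‖ ^ 2 + l / (1 + l) * ‖w‖ ^ 2 := by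
  rw [norm_sub_sq_real, norm_sub_sq_real, inner_smul_right, norm_smul, mul_pow,
    real_inner_comm z w, norm_eq_abs, sq_abs]
  field_simp
  ring

lemma lintegral_exp_neg_mul_sq_norm_sub_add {t l : ℝ} (ht : 0 < t) (hl : 0 < 1 + l) (w : E) :
    ∫⁻ z : E, ENNReal.ofReal (exp (-(t * (‖w - z‖ ^ 2 + l * ‖z‖ ^ 2)))) =
      ENNReal.ofReal (exp (-(l / (1 + l) * ‖w‖ ^ 2 * t)) * (π / (t * (1 + l))) ^ (dim(E) / 2)) := by
  have hsplit : ∀ z : E, exp (-(t * (‖w - z‖ ^ 2 + l * ‖z‖ ^ 2))) =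
      exp (-(l / (1 + l) * ‖w‖ ^ 2 * t)) *
        exp (-(t * (1 + l)) * ‖z - (1 + l)⁻¹ • w‖ ^ 2) := fun z => by
    rw [mul_sq_norm_sub_add_mul_sq_norm w z hl, ← exp_add]
    ring_nf
  simp_rw [hsplit]
  refine lintegral_ofReal_const_mul (exp_pos _).le ?_
  rw [lintegral_sub_right_eq_self
    (fun z : E => ENNReal.ofReal (exp (-(t * (1 + l)) * ‖z‖ ^ 2)))]
  exact lintegral_exp_neg_mul_sq_norm (by positivity)

lemma lintegral_lintegral_schwingerDensity_sq_norm {p r l : ℝ} (hpr : dim(E) / 2 < p + r)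
    (hl : 0 < l) {w : E} (hw : w ≠ 0) :
    ∫⁻ t in Ioi (0 : ℝ), ∫⁻ z : E,
        ENNReal.ofReal (schwingerDensity p r (‖w - z‖ ^ 2) (‖z‖ ^ 2) t l) =
      ENNReal.ofReal (π ^ (dim(E) / 2) * Gamma (p + r - dim(E) / 2) *
        (‖w‖ ^ 2) ^ (-(p + r - dim(E) / 2)) *
        (l ^ (dim(E) / 2 - p - 1) * (1 + l) ^ (-(dim(E) / 2 - p + (dim(E) / 2 - r))))) := by
  set h := dim(E) / 2
  have hl1 : 0 < 1 + l := by positivity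
  have inner : ∀ t ∈ Ioi (0 : ℝ),
      ∫⁻ z : E, ENNReal.ofReal (schwingerDensity p r (‖w - z‖ ^ 2) (‖z‖ ^ 2) t l) =
        ENNReal.ofReal (l ^ (r - 1) * (π / (1 + l)) ^ h *
          (t ^ (p + r - h - 1) * exp (-(l / (1 + l) * ‖w‖ ^ 2 * t)))) := by
    intro t (ht : 0 < t)
    refine (lintegral_ofReal_const_mul (by positivity)
      (lintegral_exp_neg_mul_sq_norm_sub_add ht hl1 w)).trans ?_
    rw [mul_comm t (1 + l), ← div_div, div_rpow (by positivity) ht.le,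
      show p + r - 1 = p + r - h - 1 + h by ring, rpow_add ht]
    congr 1
    field_simp
    rfl
  rw [setLIntegral_congr_fun measurableSet_Ioi inner, lintegral_ofReal_const_mul (by positivity)
    (lintegral_Ioi_rpow_mul_exp_neg_mul (sub_pos.2 hpr) (by positivity)),
    mul_rpow (by positivity) (by positivity), div_rpow hl.le hl1.le, div_rpow pi_pos.le hl1.le,
    show h - p - 1 = r - 1 + -(p + r - h) by ring, rpow_add hl,
    show -(h - p + (h - r)) = p + r - h - h by ring, rpow_sub hl1 _ h, rpow_neg hl1.le]
  congr 1
  field_simp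

/-- The constant in the Riesz composition formula `rieszPotential_norm_rpow` in dimension `n`. -/
noncomputable def rieszConst (n α β : ℝ) : ℝ :=
  π ^ (n / 2) * Gamma ((n - α) / 2) * Gamma ((n - β) / 2) * Gamma ((α + β - n) / 2) /
    (Gamma (α / 2) * Gamma (β / 2) * Gamma (n - (α + β) / 2))

lemma rieszConst_pos {n α β : ℝ} (hα : α < n) (hβ : β < n) (hαβ : n < α + β) :
    0 < rieszConst n α β := by
  have hΓα : 0 < Gamma (α / 2) := Gamma_pos_of_pos (by linarith)
  have hΓβ : 0 < Gamma (β / 2) := Gamma_pos_of_pos (by linarith)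
  have hΓαβ : 0 < Gamma (n - (α + β) / 2) := Gamma_pos_of_pos (by linarith)
  unfold rieszConst
  positivity

lemma lintegral_lintegral_lintegral_schwingerDensity_sq_norm {α β : ℝ} (hα : α < dim(E))
    (hβ : β < dim(E)) (hαβ : dim(E) < α + β) {w : E} (hw : w ≠ 0) :
    ∫⁻ z : E, ∫⁻ t in Ioi (0 : ℝ), ∫⁻ l in Ioi (0 : ℝ),
        ENNReal.ofReal (schwingerDensity (α / 2) (β / 2) (‖w - z‖ ^ 2) (‖z‖ ^ 2) t l) =
      ENNReal.ofReal (Gamma (α / 2) * Gamma (β / 2) *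
        (rieszConst dim(E) α β * ‖w‖ ^ (dim(E) - α - β))) := by
  have hmeas : Measurable fun x : E × ℝ × ℝ => ENNReal.ofReal
      (schwingerDensity (α / 2) (β / 2) (‖w - x.1‖ ^ 2) (‖x.1‖ ^ 2) x.2.1 x.2.2) :=
    (measurable_schwingerDensity _ _ (by fun_prop) (by fun_prop) (by fun_prop)
      (by fun_prop)).ennreal_ofReal
  rw [lintegral_lintegral_lintegral_reverse hmeas,
    setLIntegral_congr_fun measurableSet_Ioi fun l hl =>
      lintegral_lintegral_schwingerDensity_sq_norm (by linarith) hl hw]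
  have hΓα : 0 < Gamma (α / 2) := Gamma_pos_of_pos (by linarith)
  have hΓβ : 0 < Gamma (β / 2) := Gamma_pos_of_pos (by linarith)
  have hΓαβ : 0 < Gamma (α / 2 + β / 2 - dim(E) / 2) := Gamma_pos_of_pos (by linarith)
  rw [lintegral_ofReal_const_mul (by positivity)
    (lintegral_Ioi_rpow_mul_one_add_rpow (by linarith) (by linarith)), rieszConst,
    ← rpow_natCast ‖w‖ 2, ← rpow_mul (norm_nonneg w)]
  congr 1
  rw [show ((2 : ℕ) : ℝ) * -(α / 2 + β / 2 - dim(E) / 2) = dim(E) - α - β by push_cast; ring,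
    show α / 2 + β / 2 - dim(E) / 2 = (α + β - dim(E)) / 2 by ring,
    show dim(E) / 2 - α / 2 + (dim(E) / 2 - β / 2) = dim(E) - (α + β) / 2 by ring,
    show dim(E) / 2 - α / 2 = (dim(E) - α) / 2 by ring,
    show dim(E) / 2 - β / 2 = (dim(E) - β) / 2 by ring]
  field_simp

lemma lintegral_norm_sub_rpow_mul_norm_rpow {α β : ℝ} (hα : α < dim(E))
    (hβ : β < dim(E)) (hαβ : dim(E) < α + β) {w : E} (hw : w ≠ 0) :
    ∫⁻ z : E, ENNReal.ofReal (‖w - z‖ ^ (-α) * ‖z‖ ^ (-β)) =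
      ENNReal.ofReal (rieszConst dim(E) α β * ‖w‖ ^ (dim(E) - α - β)) := by
  have : Nontrivial E := nontrivial_of_finrank_lt_add hα hβ hαβ
  have hΓ : 0 < Gamma (α / 2) * Gamma (β / 2) :=
    mul_pos (Gamma_pos_of_pos (by linarith)) (Gamma_pos_of_pos (by linarith))
  have hschwinger : ∀ᵐ z : E, ∫⁻ t in Ioi (0 : ℝ), ∫⁻ l in Ioi (0 : ℝ),
        ENNReal.ofReal (schwingerDensity (α / 2) (β / 2) (‖w - z‖ ^ 2) (‖z‖ ^ 2) t l) =
      ENNReal.ofReal (Gamma (α / 2) * Gamma (β / 2) * (‖w - z‖ ^ (-α) * ‖z‖ ^ (-β))) := by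
    filter_upwards [Measure.ae_ne volume 0, Measure.ae_ne volume w] with z hz hzw
    have hwz : 0 < ‖w - z‖ := norm_pos_iff.2 (sub_ne_zero.2 hzw.symm)
    have hz' : 0 < ‖z‖ := norm_pos_iff.2 hz
    have hsq : ∀ {x : ℝ} (γ : ℝ), 0 < x → (x ^ 2) ^ (-(γ / 2)) = x ^ (-γ) := fun γ hx => by
      rw [← rpow_natCast, ← rpow_mul hx.le]
      congr 1
      push_cast
      ring
    rw [lintegral_lintegral_schwingerDensity (by linarith) (by linarith) (by positivity)
      (by positivity), hsq α hwz, hsq β hz']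
  have hmul := lintegral_lintegral_lintegral_schwingerDensity_sq_norm hα hβ hαβ hw
  rw [lintegral_congr_ae hschwinger] at hmul
  simpa only [inv_mul_cancel_left₀ hΓ.ne'] using
    lintegral_ofReal_const_mul (inv_nonneg.2 hΓ.le) hmul

/-- The Riesz potential of order `dim(E) - α` of `f`, without its customary normalization. -/
noncomputable def rieszPotential (α : ℝ) (f : E → ℝ) (x : E) : ℝ :=
  ∫ y, ‖x - y‖ ^ (-α) * f y

lemma integrable_norm_sub_rpow_mul_norm_rpow {α β : ℝ} (hα : α < dim(E))
    (hβ : β < dim(E)) (hαβ : dim(E) < α + β) {w : E} (hw : w ≠ 0) :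
    Integrable fun z : E => ‖w - z‖ ^ (-α) * ‖z‖ ^ (-β) := by
  refine (lintegral_ofReal_ne_top_iff_integrable (by fun_prop)
    (ae_of_all _ fun z => by positivity)).1 ?_
  rw [lintegral_norm_sub_rpow_mul_norm_rpow hα hβ hαβ hw]
  exact ENNReal.ofReal_ne_top

lemma rieszPotential_norm_rpow {α β : ℝ} (hα : α < dim(E))
    (hβ : β < dim(E)) (hαβ : dim(E) < α + β) {w : E} (hw : w ≠ 0) :
    rieszPotential α (fun z => ‖z‖ ^ (-β)) w =
      rieszConst dim(E) α β * ‖w‖ ^ (dim(E) - α - β) := by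
  have hC := rieszConst_pos hα hβ hαβ
  rw [rieszPotential, integral_eq_lintegral_of_nonneg_ae (ae_of_all _ fun z => by positivity)
    (by fun_prop), lintegral_norm_sub_rpow_mul_norm_rpow hα hβ hαβ hw,
    ENNReal.toReal_ofReal (by positivity)]

end RieszComposition

section NormPowers

open Set Topology Asymptotics

variable {V : Type*} [NormedAddCommGroup V]

lemma norm_rpow_mul_le_indicator_add {α β : ℝ} (hα : 0 ≤ α) {ε K : ℝ} (hε : 0 ≤ ε)
    {g : V → ℝ} (hg : ∀ y, K ≤ ‖y‖ → ‖g y‖ ≤ ε * ‖y‖ ^ (-β))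
    {x : V} (hx : 0 < ‖x‖) (hKx : 2 * K ≤ ‖x‖) (y : V) :
    ‖‖x - y‖ ^ (-α) * g y‖ ≤
      (‖x‖ / 2) ^ (-α) * (Metric.closedBall 0 K).indicator (fun y => ‖g y‖) y +
        ε * (‖x - y‖ ^ (-α) * ‖y‖ ^ (-β)) := by
  rw [norm_mul, Real.norm_of_nonneg (by positivity)]
  rcases le_total ‖y‖ K with hy | hy
  · have hxy : ‖x‖ / 2 ≤ ‖x - y‖ := by linarith [norm_sub_norm_le x y]
    rw [indicator_of_mem (mem_closedBall_zero_iff.2 hy)]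
    exact le_add_of_le_of_nonneg (mul_le_mul_of_nonneg_right
      (Real.rpow_le_rpow_of_nonpos (by positivity) hxy (neg_nonpos.2 hα)) (norm_nonneg _))
      (by positivity)
  · refine le_add_of_nonneg_of_le
      (mul_nonneg (by positivity) (indicator_nonneg (fun _ _ => norm_nonneg _) _)) ?_
    calc ‖x - y‖ ^ (-α) * ‖g y‖ ≤ ‖x - y‖ ^ (-α) * (ε * ‖y‖ ^ (-β)) := by gcongr; exact hg y hy
      _ = ε * (‖x - y‖ ^ (-α) * ‖y‖ ^ (-β)) := by ring

variable [ProperSpace V]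

lemma eventually_cocompact_norm_pos : ∀ᶠ x : V in cocompact V, 0 < ‖x‖ :=
  tendsto_norm_cocompact_atTop.eventually_gt_atTop 0

lemma half_norm_rpow_isLittleO {a b : ℝ} (hab : a < b) :
    (fun x : V => (‖x‖ / 2) ^ a) =o[cocompact V] fun x => ‖x‖ ^ b := by
  refine (isLittleO_iff_tendsto' ?_).2 ?_
  · filter_upwards [eventually_cocompact_norm_pos] with x hx h0
    exact absurd h0 (by positivity)
  · have hdecay : Tendsto (fun x : V => (2 : ℝ) ^ (-a) * ‖x‖ ^ (-(b - a))) (cocompact V) (𝓝 0) := by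
      simpa using ((tendsto_rpow_neg_atTop (sub_pos.2 hab)).comp
        (tendsto_norm_cocompact_atTop (E := V))).const_mul ((2 : ℝ) ^ (-a))
    refine hdecay.congr' ?_
    filter_upwards [eventually_cocompact_norm_pos] with x hx
    rw [Real.div_rpow hx.le two_pos.le, Real.rpow_neg two_pos.le, neg_sub, Real.rpow_sub hx]
    ring

lemma sub_const_mul_norm_rpow_isLittleO {f : V → ℝ} {β L : ℝ}
    (hf : Tendsto (fun y => ‖y‖ ^ β * f y) (cocompact V) (𝓝 L)) :
    (fun y => f y - L * ‖y‖ ^ (-β)) =o[cocompact V] fun y => ‖y‖ ^ (-β) := by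
  refine (isLittleO_iff_tendsto' ?_).2 ?_
  · filter_upwards [eventually_cocompact_norm_pos] with y hy h0
    exact absurd h0 (by positivity)
  · refine (sub_self L ▸ hf.sub_const L).congr' ?_
    filter_upwards [eventually_cocompact_norm_pos] with y hy
    rw [Real.rpow_neg hy.le]
    field_simp

lemma tendsto_norm_rpow_mul_rpow_mul_rpow {u v : V → ℝ} (hu : ∀ x, 0 ≤ u x) (hv : ∀ x, 0 ≤ v x)
    {μ ν lu lv q s : ℝ} (hlu : lu ≠ 0) (hlv : lv ≠ 0)
    (hulim : Tendsto (fun x => ‖x‖ ^ μ * u x) (cocompact V) (𝓝 lu))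
    (hvlim : Tendsto (fun x => ‖x‖ ^ ν * v x) (cocompact V) (𝓝 lv)) :
    Tendsto (fun x => ‖x‖ ^ (μ * q + ν * s) * (u x ^ q * v x ^ s)) (cocompact V)
      (𝓝 (lu ^ q * lv ^ s)) := by
  refine ((hulim.rpow_const (Or.inl hlu)).mul (hvlim.rpow_const (Or.inl hlv))).congr' ?_
  filter_upwards [eventually_cocompact_norm_pos] with x hx
  rw [Real.mul_rpow (by positivity) (hu x), Real.mul_rpow (by positivity) (hv x),
    ← Real.rpow_mul hx.le, ← Real.rpow_mul hx.le, Real.rpow_add hx]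
  ring

end NormPowers

section RieszAsymptotics

open Module Set Topology Asymptotics

variable {E : Type*} [NormedAddCommGroup E] [InnerProductSpace ℝ E] [FiniteDimensional ℝ E]
  [MeasurableSpace E] [BorelSpace E] {α β : ℝ}

local notation "dim(" V ")" => (finrank ℝ V : ℝ)

lemma locallyIntegrable_of_integrable_norm_sub_rpow_mul [Nontrivial E] (hα : 0 ≤ α) {f : E → ℝ}
    {x : E} (hf : Integrable fun y => ‖x - y‖ ^ (-α) * f y) : LocallyIntegrable f := by
  have hcont : Continuous fun y : E => ‖x - y‖ ^ α :=
    (by fun_prop : Continuous fun y : E => ‖x - y‖).rpow_const fun _ => Or.inr hα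
  refine (hf.locallyIntegrable.continuous_mul hcont).congr ?_
  filter_upwards [Measure.ae_ne volume x] with y hy
  have hxy : 0 < ‖x - y‖ := norm_pos_iff.2 (sub_ne_zero.2 hy.symm)
  change ‖x - y‖ ^ α * (‖x - y‖ ^ (-α) * f y) = f y
  rw [← mul_assoc, ← Real.rpow_add hxy, add_neg_cancel, Real.rpow_zero, one_mul]

lemma locallyIntegrable_norm_rpow (hα : α < dim(E)) (hβ : β < dim(E)) (hαβ : dim(E) < α + β) :
    LocallyIntegrable fun y : E => ‖y‖ ^ (-β) := by
  have : Nontrivial E := nontrivial_of_finrank_lt_add hα hβ hαβ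
  obtain ⟨w, hw⟩ := exists_ne (0 : E)
  exact locallyIntegrable_of_integrable_norm_sub_rpow_mul (by linarith)
    (integrable_norm_sub_rpow_mul_norm_rpow hα hβ hαβ hw)

lemma exists_eventually_norm_rieszPotential_le (hα : α < dim(E)) (hβ : β < dim(E))
    (hαβ : dim(E) < α + β) {g : E → ℝ} (hg : LocallyIntegrable g) {ε : ℝ} (hε : 0 ≤ ε)
    (hgε : IsBigOWith ε (cocompact E) g fun y => ‖y‖ ^ (-β)) :
    ∃ M, ∀ᶠ x in cocompact E, (Integrable fun y => ‖x - y‖ ^ (-α) * g y) ∧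
      ‖rieszPotential α g x‖ ≤
        (‖x‖ / 2) ^ (-α) * M + ε * (rieszConst dim(E) α β * ‖x‖ ^ (dim(E) - α - β)) := by
  obtain ⟨K, -, hK⟩ : ∃ K, True ∧ ∀ y : E, K ≤ ‖y‖ → ‖g y‖ ≤ ε * ‖‖y‖ ^ (-β)‖ := by
    simpa using (hasBasis_cobounded_norm (E := E)).eventually_iff.1
      (Metric.cobounded_eq_cocompact (α := E) ▸ hgε.bound)
  have hball : Integrable ((Metric.closedBall 0 K).indicator fun y => ‖g y‖) :=
    (integrable_indicator_iff measurableSet_closedBall).2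
      (hg.integrableOn_isCompact (isCompact_closedBall 0 K)).norm
  refine ⟨∫ y, (Metric.closedBall 0 K).indicator (fun y => ‖g y‖) y, ?_⟩
  filter_upwards [eventually_cocompact_norm_pos,
    tendsto_norm_cocompact_atTop.eventually_ge_atTop (2 * K)] with x hx hKx
  have hbound := norm_rpow_mul_le_indicator_add (by linarith : 0 ≤ α) hε (fun y hy => by
    simpa only [Real.norm_of_nonneg (Real.rpow_nonneg (norm_nonneg y) _)] using hK y hy) hx hKx
  have hin := hball.const_mul ((‖x‖ / 2) ^ (-α))
  have hout := (integrable_norm_sub_rpow_mul_norm_rpow hα hβ hαβ (norm_pos_iff.1 hx)).const_mul ε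
  refine ⟨(hin.add hout).mono' ?_ (ae_of_all _ hbound), ?_⟩
  · exact (by fun_prop : Measurable fun y : E => ‖x - y‖ ^ (-α)).aestronglyMeasurable.mul
      hg.aestronglyMeasurable
  · rw [← rieszPotential_norm_rpow hα hβ hαβ (norm_pos_iff.1 hx), rieszPotential, rieszPotential,
      ← integral_const_mul, ← integral_const_mul, ← integral_add hin hout]
    exact norm_integral_le_of_norm_le (hin.add hout) (ae_of_all _ hbound)

lemma rieszPotential_isLittleO (hα : α < dim(E)) (hβ : β < dim(E)) (hαβ : dim(E) < α + β)
    {g : E → ℝ} (hg : LocallyIntegrable g) (hgo : g =o[cocompact E] fun y => ‖y‖ ^ (-β)) :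
    rieszPotential α g =o[cocompact E] fun x => ‖x‖ ^ (dim(E) - α - β) := by
  have hC := rieszConst_pos hα hβ hαβ
  refine isLittleO_iff.2 fun c hc => ?_
  obtain ⟨M, hM⟩ := exists_eventually_norm_rieszPotential_le hα hβ hαβ hg
    (by positivity : 0 ≤ c / 2 / rieszConst dim(E) α β) (hgo.forall_isBigOWith (by positivity))
  have hhead : (fun x : E => (‖x‖ / 2) ^ (-α) * M) =o[cocompact E]
      fun x => ‖x‖ ^ (dim(E) - α - β) := by
    simpa only [mul_comm M] using
      (half_norm_rpow_isLittleO (by linarith)).const_mul_left M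
  filter_upwards [hM, hhead.bound (half_pos hc)] with x ⟨_, hx⟩ hx'
  rw [Real.norm_of_nonneg (by positivity : 0 ≤ ‖x‖ ^ (dim(E) - α - β))] at hx' ⊢
  calc ‖rieszPotential α g x‖
      ≤ (‖x‖ / 2) ^ (-α) * M + c / 2 / rieszConst dim(E) α β *
          (rieszConst dim(E) α β * ‖x‖ ^ (dim(E) - α - β)) := hx
    _ ≤ c / 2 * ‖x‖ ^ (dim(E) - α - β) + c / 2 / rieszConst dim(E) α β *
          (rieszConst dim(E) α β * ‖x‖ ^ (dim(E) - α - β)) :=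
        add_le_add_left ((le_abs_self _).trans hx') _
    _ = c * ‖x‖ ^ (dim(E) - α - β) := by field_simp; ring

lemma tendsto_norm_rpow_mul_rieszPotential (hα : α < dim(E)) (hβ : β < dim(E))
    (hαβ : dim(E) < α + β) {f : E → ℝ} (hf : LocallyIntegrable f) {L : ℝ}
    (hfL : Tendsto (fun y => ‖y‖ ^ β * f y) (cocompact E) (𝓝 L)) :
    Tendsto (fun x => ‖x‖ ^ (α + β - dim(E)) * rieszPotential α f x) (cocompact E)
      (𝓝 (L * rieszConst dim(E) α β)) := by
  set g : E → ℝ := fun y => f y - L * ‖y‖ ^ (-β)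
  have hg : LocallyIntegrable g := hf.sub ((locallyIntegrable_norm_rpow hα hβ hαβ).smul L)
  have hgo : g =o[cocompact E] fun y => ‖y‖ ^ (-β) := sub_const_mul_norm_rpow_isLittleO hfL
  obtain ⟨_, hint⟩ := exists_eventually_norm_rieszPotential_le hα hβ hαβ hg zero_le_one
    (hgo.forall_isBigOWith one_pos)
  have hremainder := (rieszPotential_isLittleO hα hβ hαβ hg hgo).tendsto_div_nhds_zero
  refine (zero_add (L * rieszConst dim(E) α β) ▸ hremainder.add_const _).congr' ?_
  filter_upwards [hint, eventually_cocompact_norm_pos] with x ⟨hgx, _⟩ hx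
  have hmodel := (integrable_norm_sub_rpow_mul_norm_rpow hα hβ hαβ (norm_pos_iff.1 hx)).const_mul L
  have hsplit : rieszPotential α f x =
      rieszPotential α g x + L * (rieszConst dim(E) α β * ‖x‖ ^ (dim(E) - α - β)) := by
    rw [← rieszPotential_norm_rpow hα hβ hαβ (norm_pos_iff.1 hx), rieszPotential, rieszPotential,
      rieszPotential, ← integral_const_mul, ← integral_add hgx hmodel]
    refine integral_congr_ae (ae_of_all _ fun y => ?_)
    simp only [g]
    ring
  rw [hsplit, show α + β - dim(E) = -(dim(E) - α - β) by ring, Real.rpow_neg hx.le]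
  field_simp

lemma limit_eq_of_eq_rieszPotential {u v : E → ℝ} (hu : ∀ x, 0 ≤ u x) (hv : ∀ x, 0 ≤ v x)
    {c μ lu lv q s : ℝ} (hα : α < dim(E)) (hβ : β < dim(E)) (hαβ : dim(E) < α + β)
    (hβ_eq : β = μ * q + (α + β - dim(E)) * s) (hlu : lu ≠ 0) (hlv : lv ≠ 0)
    (hulim : Tendsto (fun x => ‖x‖ ^ μ * u x) (cocompact E) (𝓝 lu))
    (hvlim : Tendsto (fun x => ‖x‖ ^ (α + β - dim(E)) * v x) (cocompact E) (𝓝 lv))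
    (hv0 : v 0 ≠ 0)
    (hrep : ∀ x, v x = c * rieszPotential α (fun y => u y ^ q * v y ^ s) x) :
    lv = c * rieszConst dim(E) α β * (lu ^ q * lv ^ s) := by
  have : Nontrivial E := nontrivial_of_finrank_lt_add hα hβ hαβ
  -- A non-integrable integrand would give the junk value `v 0 = 0`.
  have hint : Integrable fun y : E => ‖0 - y‖ ^ (-α) * (u y ^ q * v y ^ s) :=
    Integrable.of_integral_ne_zero (right_ne_zero_of_mul (hrep 0 ▸ hv0))
  have hdecay := tendsto_norm_rpow_mul_rpow_mul_rpow (q := q) (s := s) hu hv hlu hlv hulim hvlim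
  rw [← hβ_eq] at hdecay
  have hpot := (tendsto_norm_rpow_mul_rieszPotential hα hβ hαβ
    (locallyIntegrable_of_integrable_norm_sub_rpow_mul (by linarith) hint) hdecay).const_mul c
  exact (tendsto_nhds_unique hvlim (hpot.congr fun x => by rw [hrep x]; ring)).trans (by ring)

end RieszAsymptotics

section Newtonian

open Module Topology

variable {E : Type*} [NormedAddCommGroup E] [InnerProductSpace ℝ E] [FiniteDimensional ℝ E]
  [MeasurableSpace E] [BorelSpace E]

local notation "dim(" V ")" => (finrank ℝ V : ℝ)

variable (E) in
/-- The factor making `newtonianConst E * ‖x‖ ^ (2 - dim(E))` the fundamental solution of `-Δ`;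
`dim(E)` times the volume of the unit ball is the area of the unit sphere. -/
noncomputable def newtonianConst : ℝ :=
  ((dim(E) - 2) * (dim(E) * (volume (Metric.ball (0 : E) 1)).toReal))⁻¹

lemma volume_ball_one_toReal [Nontrivial E] :
    (volume (Metric.ball (0 : E) 1)).toReal =
      Real.pi ^ (dim(E) / 2) / Real.Gamma (dim(E) / 2 + 1) := by
  rw [InnerProductSpace.volume_ball, ENNReal.ofReal_one, one_pow, one_mul,
    ENNReal.toReal_ofReal (by positivity), Real.sqrt_eq_rpow, ← Real.rpow_natCast,
    ← Real.rpow_mul Real.pi_pos.le, one_div_mul_eq_div]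

lemma rieszConst_newtonian {n a : ℝ} (ha : 0 < a) (han : a < n - 2) :
    rieszConst n (n - 2) (a + 2) =
      4 * Real.pi ^ (n / 2) / (Real.Gamma ((n - 2) / 2) * (a * (n - 2 - a))) := by
  have hna : 0 < n - 2 - a := sub_pos.2 han
  rw [rieszConst, show (n - (n - 2)) / 2 = 1 by ring, Real.Gamma_one,
    show (n - (a + 2)) / 2 = (n - 2 - a) / 2 by ring,
    show (n - 2 + (a + 2) - n) / 2 = a / 2 by ring,
    show (a + 2) / 2 = a / 2 + 1 by ring,
    show n - (n - 2 + (a + 2)) / 2 = (n - 2 - a) / 2 + 1 by ring,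
    Real.Gamma_add_one (by positivity), Real.Gamma_add_one (by positivity)]
  field_simp
  ring

lemma newtonianConst_eq (hE : 3 ≤ finrank ℝ E) :
    newtonianConst E = Real.Gamma ((dim(E) - 2) / 2) / (4 * Real.pi ^ (dim(E) / 2)) := by
  have : Nontrivial E := nontrivial_of_finrank_pos (R := ℝ) (by omega)
  have hd : (3 : ℝ) ≤ dim(E) := by exact_mod_cast hE
  have hd2 : 0 < dim(E) - 2 := by linarith
  have hΓ : Real.Gamma (dim(E) / 2 + 1) =
      dim(E) / 2 * ((dim(E) - 2) / 2 * Real.Gamma ((dim(E) - 2) / 2)) := by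
    rw [Real.Gamma_add_one (by linarith),
      ← Real.Gamma_add_one (s := (dim(E) - 2) / 2) (by positivity),
      show (dim(E) - 2) / 2 + 1 = dim(E) / 2 by ring]
  rw [newtonianConst, volume_ball_one_toReal, hΓ]
  field_simp
  ring

lemma newtonianConst_mul_rieszConst (hE : 3 ≤ finrank ℝ E) {a : ℝ} (ha : 0 < a)
    (had : a < dim(E) - 2) :
    newtonianConst E * rieszConst dim(E) (dim(E) - 2) (a + 2) = (a * (dim(E) - 2 - a))⁻¹ := by
  have hΓ : 0 < Real.Gamma ((dim(E) - 2) / 2) := Real.Gamma_pos_of_pos (by linarith)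
  have hda : 0 < dim(E) - 2 - a := sub_pos.2 had
  rw [newtonianConst_eq hE, rieszConst_newtonian ha had]
  field_simp

lemma integral_fundamentalSolution_mul [Nontrivial E] {Γ : E → ℝ}
    (hΓ : ∀ x, x ≠ 0 → Γ x = newtonianConst E * ‖x‖ ^ (2 - dim(E))) (f : E → ℝ) (x : E) :
    ∫ y, Γ (x - y) * f y = newtonianConst E * rieszPotential (dim(E) - 2) f x := by
  rw [rieszPotential, ← integral_const_mul]
  refine integral_congr_ae ?_
  filter_upwards [Measure.ae_ne volume x] with y hy
  rw [hΓ _ (sub_ne_zero.2 hy.symm), neg_sub, mul_assoc]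

theorem stmt_19_general (hE : 3 ≤ finrank ℝ E) {q s : ℝ} (hq : 2 / (dim(E) - 2) < q) (hs : s < 1)
    (hqs : q + s < dim(E) / (dim(E) - 2)) {Γ : E → ℝ}
    (hΓ : ∀ x, x ≠ 0 → Γ x = newtonianConst E * ‖x‖ ^ (2 - dim(E))) {u v : E → ℝ}
    (hupos : ∀ x, 0 < u x) (hvpos : ∀ x, 0 < v x) {lu lv : ℝ} (hlu : 0 < lu) (hlv : 0 < lv)
    (hulim : Tendsto (fun x => ‖x‖ ^ (dim(E) - 2) * u x) (cocompact E) (𝓝 lu))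
    (hvlim : Tendsto (fun x => ‖x‖ ^ (((dim(E) - 2) * q - 2) / (1 - s)) * v x) (cocompact E)
      (𝓝 lv))
    (hvrep : ∀ x, v x = ∫ y, Γ (x - y) * (u y ^ q * v y ^ s)) :
    lu ^ q * lv ^ (s - 1) =
      ((dim(E) - 2) * q - 2) * (dim(E) - (dim(E) - 2) * (q + s)) / (1 - s) ^ 2 := by
  have : Nontrivial E := nontrivial_of_finrank_pos (R := ℝ) (by omega)
  have hd : 0 < dim(E) - 2 := by
    have : (3 : ℝ) ≤ dim(E) := by exact_mod_cast hE
    linarith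
  have hs' : 0 < 1 - s := sub_pos.2 hs
  rw [div_lt_iff₀ hd] at hq
  rw [lt_div_iff₀ hd] at hqs
  set a := ((dim(E) - 2) * q - 2) / (1 - s)
  have ha_mul : a * (1 - s) = (dim(E) - 2) * q - 2 := div_mul_cancel₀ _ hs'.ne'
  have ha_pos : 0 < a := div_pos (by linarith) hs'
  have ha_lt : a < dim(E) - 2 := (div_lt_iff₀ hs').2 (by linarith)
  have hda_pos : 0 < dim(E) - 2 - a := sub_pos.2 ha_lt
  have hexp : dim(E) - 2 + (a + 2) - dim(E) = a := by ring
  have hlimits := limit_eq_of_eq_rieszPotential (α := dim(E) - 2) (β := a + 2)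
    (c := newtonianConst E) (μ := dim(E) - 2) (q := q) (s := s)
    (fun x => (hupos x).le) (fun x => (hvpos x).le) (by linarith) (by linarith) (by linarith)
    (by rw [hexp]; linarith) hlu.ne' hlv.ne' hulim (by rwa [hexp]) (hvpos 0).ne'
    fun x => by rw [hvrep, integral_fundamentalSolution_mul hΓ]
  rw [newtonianConst_mul_rieszConst hE ha_pos ha_lt,
    eq_inv_mul_iff_mul_eq₀ (by positivity)] at hlimits
  rw [Real.rpow_sub_one hlv.ne', ← mul_div_assoc, ← hlimits,
    mul_div_cancel_right₀ _ hlv.ne', ← ha_mul,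
    show dim(E) - (dim(E) - 2) * (q + s) = (1 - s) * (dim(E) - 2 - a) by linarith]
  field_simp

end Newtonian


theorem stmt_19 (n : ℕ) (hn : 3 ≤ n) (q s : ℝ)
    (hq : 2 / ((n : ℝ) - 2) < q) (hs0 : 0 ≤ s) (hs1 : s < 1)
    (hqs : q + s < (n : ℝ) / (n - 2))
    (ω' : ℝ)
    (hω' : ω' = n * (volume (Metric.ball (0 : EuclideanSpace ℝ (Fin n)) 1)).toReal)
    (Γ : EuclideanSpace ℝ (Fin n) → ℝ)
    (hΓ : ∀ x : EuclideanSpace ℝ (Fin n), x ≠ 0 →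
      Γ x = (((n : ℝ) - 2) * ω')⁻¹ * ‖x‖ ^ (2 - (n : ℝ)))
    (u v : EuclideanSpace ℝ (Fin n) → ℝ)
    (hucont : Continuous u) (hvcont : Continuous v)
    (hupos : ∀ x, 0 < u x) (hvpos : ∀ x, 0 < v x)
    (lu lv : ℝ) (hlu : 0 < lu) (hlv : 0 < lv)
    (hulim : Tendsto (fun x : EuclideanSpace ℝ (Fin n) => ‖x‖ ^ ((n : ℝ) - 2) * u x)
      (cocompact (EuclideanSpace ℝ (Fin n))) (nhds lu))
    (hvlim : Tendsto (fun x : EuclideanSpace ℝ (Fin n) =>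
        ‖x‖ ^ ((((n : ℝ) - 2) * q - 2) / (1 - s)) * v x)
      (cocompact (EuclideanSpace ℝ (Fin n))) (nhds lv))
    (hvrep : ∀ x, v x = ∫ y, Γ (x - y) * (u y ^ q * v y ^ s)) :
    lu ^ q * lv ^ (s - 1) =
      (((n : ℝ) - 2) * q - 2) * ((n : ℝ) - ((n : ℝ) - 2) * (q + s)) / (1 - s) ^ 2 := by
  subst hω'
  have hdim := finrank_euclideanSpace_fin (𝕜 := ℝ) (n := n)
  refine hdim ▸ stmt_19_general (E := EuclideanSpace ℝ (Fin n)) ?_ ?_ hs1 ?_ ?_ hupos hvpos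
    hlu hlv ?_ ?_ hvrep
  all_goals simpa only [newtonianConst, hdim]
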